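/- (Hermite reciprocity) Let U be a 2-dimensional vector space over a field of characteristic zero. For all nonnegative integers d and i, there is a linear isomorphism Sym^d(Sym^i U) ≅ ⋀^i(Sym^{d+i−1} U). In particular, both spaces have dimension binomial(d+i, i). -/

import Mathlib

open scoped TensorProduct
open MvPolynomial Module

set_option maxHeartbeats 1000000
set_option synthInstance.maxHeartbeats 1000000
set_option maxSynthPendingDepth 3

noncomputable section

namespace KoszulMod

/-- `Sym^m U` for `U` a 2-dimensional space: binary forms of degree `m`. -/
abbrev SymU (𝕜 : Type*) [Field 𝕜] (m : ℕ) : Submodule 𝕜 (MvPolynomial (Fin 2) 𝕜) :=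
  homogeneousSubmodule (Fin 2) 𝕜 m

/-- `Sym^d(Sym^i U)`: since `Sym^i U` is `(i+1)`-dimensional, its `d`-th symmetric power is
modelled by homogeneous polynomials of degree `d` in `i+1` variables. -/
abbrev SymSymU (𝕜 : Type*) [Field 𝕜] (d i : ℕ) : Submodule 𝕜 (MvPolynomial (Fin (i + 1)) 𝕜) :=
  homogeneousSubmodule (Fin (i + 1)) 𝕜 d

/-- The monomials of degree `n` form a basis of the homogeneous polynomials of degree `n`. -/
def homogeneousSubmoduleBasis (σ R : Type*) [CommSemiring R] (n : ℕ) :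
    Basis {d : σ →₀ ℕ | d.degree = n} R (homogeneousSubmodule σ R n) :=
  (basisRestrictSupport R {d : σ →₀ ℕ | d.degree = n}).map
    (LinearEquiv.ofEq _ _ (homogeneousSubmodule_eq_finsupp_supported σ R n).symm)

instance homogeneousSubmodule_finite (σ R : Type*) [Finite σ] [CommSemiring R] (n : ℕ) :
    Module.Finite R (homogeneousSubmodule σ R n) :=
  Module.Finite.iff_fg.mpr (homogeneousSubmodule_fg σ R n)

theorem finrank_homogeneousSubmodule (σ R : Type*) [Fintype σ] [CommRing R]
    [Nontrivial R] (n : ℕ) :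
    finrank R (homogeneousSubmodule σ R n) = (Fintype.card σ).multichoose n := by
  classical
  rw [finrank_eq_nat_card_basis (homogeneousSubmoduleBasis σ R n),
    ← Sym.card_sym_eq_multichoose σ n, ← Nat.card_eq_fintype_card]
  exact Nat.card_congr (Sym.equivNatSum σ n).symm

theorem finrank_symSymU (𝕜 : Type*) [Field 𝕜] (d i : ℕ) :
    finrank 𝕜 (SymSymU 𝕜 d i) = (d + i).choose i := by
  rw [finrank_homogeneousSubmodule, Fintype.card_fin, Nat.multichoose_eq,
    show i + 1 + d - 1 = d + i by omega, ← Nat.choose_symm_add]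

theorem finrank_exteriorPower_symU (𝕜 : Type*) [Field 𝕜] (d i : ℕ) :
    finrank 𝕜 (⋀[𝕜]^i (SymU 𝕜 (d + i - 1))) = (d + i).choose i := by
  rw [exteriorPower.finrank_eq, finrank_homogeneousSubmodule, Fintype.card_fin,
    Nat.multichoose_two]
  obtain rfl | hi := i.eq_zero_or_pos
  · simp
  · rw [Nat.sub_add_cancel (by omega)]

/-- Hermite reciprocity. Let `U` be a 2-dimensional vector space over a
field of characteristic zero.  For all `d, i ≥ 0` there is a linear isomorphism
`Sym^d(Sym^i U) ≅ ⋀^i(Sym^{d+i−1} U)`; in particular both spaces have dimension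
`binomial (d+i) i`. -/
theorem hermite_reciprocity (𝕜 : Type*) [Field 𝕜] [CharZero 𝕜] (d i : ℕ) :
    Nonempty (↥(SymSymU 𝕜 d i) ≃ₗ[𝕜] ↥(⋀[𝕜]^i ↥(SymU 𝕜 (d + i - 1)))) ∧
    Module.finrank 𝕜 ↥(SymSymU 𝕜 d i) = Nat.choose (d + i) i ∧
    Module.finrank 𝕜 ↥(⋀[𝕜]^i ↥(SymU 𝕜 (d + i - 1))) = Nat.choose (d + i) i := by
  have hs := finrank_symSymU 𝕜 d i
  have he := finrank_exteriorPower_symU 𝕜 d i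
  exact ⟨⟨LinearEquiv.ofFinrankEq _ _ (hs.trans he.symm)⟩, hs, he⟩

end KoszulMod
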